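/- The real polynomial Bohnenblust–Hille constants satisfy limsup_{m→∞} D_{ℝ,m}^{1/m} ≤ 2; equivalently, for every ε > 0 there is a constant C_ε > 0 such that D_{ℝ,m} ≤ C_ε (2+ε)^m for all positive integers m. -/

import Mathlib

open MvPolynomial Filter

/-- The sup norm of a real polynomial in `n` variables over the cube `[-1,1]^n`. -/
noncomputable def supNorm {n : ℕ} (P : MvPolynomial (Fin n) ℝ) : ℝ :=
  sSup {y : ℝ | ∃ x : Fin n → ℝ, (∀ i, |x i| ≤ 1) ∧ y = |eval x P|}

/-- The `ℓ_p` norm of the coefficients of a real polynomial. -/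
noncomputable def lpNorm {n : ℕ} (p : ℝ) (P : MvPolynomial (Fin n) ℝ) : ℝ :=
  (∑ α ∈ P.support, |coeff α P| ^ p) ^ (1 / p)

/-- The real polynomial Bohnenblust–Hille constant `D_{ℝ,m}`. -/
noncomputable def BHconst (m : ℕ) : ℝ :=
  sInf {D : ℝ | 0 < D ∧ ∀ (n : ℕ) (P : MvPolynomial (Fin n) ℝ),
    P.IsHomogeneous m → lpNorm (2 * m / (m + 1)) P ≤ D * supNorm P}

/-- The real polynomial Bohnenblust–Hille constant `D_{ℝ,m}(n)` in a fixed number `n`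
of variables. -/
noncomputable def BHconstN (m n : ℕ) : ℝ :=
  sInf {D : ℝ | 0 < D ∧ ∀ P : MvPolynomial (Fin n) ℝ,
    P.IsHomogeneous m → lpNorm (2 * m / (m + 1)) P ≤ D * supNorm P}

theorem bh_holder {ι : Type*} (s : Finset ι) (x y : ι → ℝ) (hx : ∀ i, 0 ≤ x i)
    (hy : ∀ i, 0 ≤ y i) {a b : ℝ} (ha : 0 < a) (hb : 0 < b) (hab : a + b = 1) :
    ∑ i ∈ s, x i ^ a * y i ^ b ≤ (∑ i ∈ s, x i) ^ a * (∑ i ∈ s, y i) ^ b := by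
  have hc : (1 / a).HolderConjugate (1 / b) := by
    rw [Real.holderConjugate_iff]
    constructor
    · rw [lt_div_iff₀ ha]; linarith
    · simpa using hab
  have h := Real.inner_le_Lp_mul_Lq_of_nonneg s (f := fun i => x i ^ a) (g := fun i => y i ^ b) hc
    (fun i _ => Real.rpow_nonneg (hx i) _) (fun i _ => Real.rpow_nonneg (hy i) _)
  have e1 : ∀ i, (x i ^ a) ^ (1 / a) = x i := fun i => by
    rw [← Real.rpow_mul (hx i), mul_one_div_cancel ha.ne', Real.rpow_one]
  have e2 : ∀ i, (y i ^ b) ^ (1 / b) = y i := fun i => by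
    rw [← Real.rpow_mul (hy i), mul_one_div_cancel hb.ne', Real.rpow_one]
  simpa only [e1, e2, one_div_one_div] using h

theorem bh_minkowski {ι κ : Type*} (s : Finset ι) (t : Finset κ) (G : ι → κ → ℝ)
    (hG : ∀ i j, 0 ≤ G i j) {p : ℝ} (hp : 1 ≤ p) :
    (∑ i ∈ s, (∑ j ∈ t, G i j) ^ p) ^ (1 / p) ≤ ∑ j ∈ t, (∑ i ∈ s, G i j ^ p) ^ (1 / p) := by
  classical
  induction t using Finset.induction_on with
  | empty =>
    have : p ≠ 0 := by linarith
    simp [Real.zero_rpow this, Real.zero_rpow (inv_ne_zero this)]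
  | insert j t hj ih =>
    simp only [Finset.sum_insert hj]
    refine (Real.Lp_add_le_of_nonneg s hp (fun i _ => hG i j)
      (fun i _ => Finset.sum_nonneg fun _ _ => hG i _)).trans ?_
    gcongr

/-- two-block interpolation -/
theorem bh_merge {I J : Type*} [Fintype I] [Fintype J] (H : I → J → ℝ) (hH : ∀ i j, 0 ≤ H i j)
    (k l : ℕ) (hk : 0 < k) (hl : 0 < l) (R : ℝ) (hR : 0 ≤ R)
    (h1 : ∑ i, (∑ j, H i j) ^ ((k : ℝ) / (k + 1)) ≤ R ^ ((k : ℝ) / (k + 1)))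
    (h2 : ∑ j, (∑ i, H i j) ^ ((l : ℝ) / (l + 1)) ≤ R ^ ((l : ℝ) / (l + 1))) :
    ∑ i, ∑ j, H i j ^ (((k + l : ℕ) : ℝ) / ((k + l : ℕ) + 1)) ≤
      R ^ (((k + l : ℕ) : ℝ) / ((k + l : ℕ) + 1)) := by
  have hk' : (0 : ℝ) < k := by exact_mod_cast hk
  have hl' : (0 : ℝ) < l := by exact_mod_cast hl
  push_cast
  set K : ℝ := k + l + 1 with hK
  have hKp : 0 < K := by positivity
  have row : ∀ i, ∑ j, H i j ^ (((k : ℝ) + l) / K) ≤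
      (∑ j, H i j) ^ ((k : ℝ) / K) * (∑ j, H i j ^ ((l : ℝ) / (l + 1))) ^ (((l : ℝ) + 1) / K) := by
    intro i
    have := bh_holder Finset.univ (fun j => H i j) (fun j => H i j ^ ((l : ℝ) / (l + 1))) (hH i)
      (fun j => Real.rpow_nonneg (hH i j) _) (a := k / K) (b := (l + 1) / K) (by positivity)
      (by positivity) (by rw [hK]; field_simp; ring)
    refine le_trans (le_of_eq ?_) this
    refine Finset.sum_congr rfl fun j _ => ?_
    rw [← Real.rpow_mul (hH i j), ← Real.rpow_add_of_nonneg (hH i j) (by positivity) (by positivity)]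
    congr 1
    field_simp
  set A : I → ℝ := fun i => ∑ j, H i j with hA
  set B : I → ℝ := fun i => ∑ j, H i j ^ ((l : ℝ) / (l + 1)) with hB
  have hA0 : ∀ i, 0 ≤ A i := fun i => Finset.sum_nonneg fun j _ => hH i j
  have hB0 : ∀ i, 0 ≤ B i := fun i => Finset.sum_nonneg fun j _ => Real.rpow_nonneg (hH i j) _
  have step2 : ∑ i, A i ^ ((k : ℝ) / K) * B i ^ (((l : ℝ) + 1) / K) ≤
      (∑ i, A i ^ ((k : ℝ) / (k + 1))) ^ (((k : ℝ) + 1) / K) *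
      (∑ i, B i ^ (((l : ℝ) + 1) / l)) ^ ((l : ℝ) / K) := by
    have := bh_holder Finset.univ (fun i => A i ^ ((k : ℝ) / (k + 1)))
      (fun i => B i ^ (((l : ℝ) + 1) / l)) (fun i => Real.rpow_nonneg (hA0 i) _)
      (fun i => Real.rpow_nonneg (hB0 i) _) (a := (k + 1) / K) (b := l / K) (by positivity)
      (by positivity) (by rw [hK]; field_simp; ring)
    refine le_trans (le_of_eq ?_) this
    refine Finset.sum_congr rfl fun j _ => ?_
    rw [← Real.rpow_mul (hA0 j), ← Real.rpow_mul (hB0 j)]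
    congr 2 <;> field_simp
  have mink := bh_minkowski Finset.univ Finset.univ (fun i j => H i j ^ ((l : ℝ) / (l + 1)))
    (fun i j => Real.rpow_nonneg (hH i j) _) (p := ((l : ℝ) + 1) / l)
    (by rw [le_div_iff₀ hl']; linarith)
  have e1 : ∀ i j, (H i j ^ ((l : ℝ) / (l + 1))) ^ (((l : ℝ) + 1) / l) = H i j := fun i j => by
    rw [← Real.rpow_mul (hH i j)]
    rw [show (l : ℝ) / (l + 1) * ((l + 1) / l) = 1 by field_simp, Real.rpow_one]
  simp only [e1, one_div_div] at mink
  have mink2 := mink.trans h2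
  have hS : 0 ≤ ∑ i, B i ^ (((l : ℝ) + 1) / l) :=
    Finset.sum_nonneg fun i _ => Real.rpow_nonneg (hB0 i) _
  have mink3 : ∑ i, B i ^ (((l : ℝ) + 1) / l) ≤ R :=
    (Real.rpow_le_rpow_iff hS hR (by positivity)).1 mink2
  calc ∑ i, ∑ j, H i j ^ (((k : ℝ) + l) / K)
      ≤ ∑ i, A i ^ ((k : ℝ) / K) * B i ^ (((l : ℝ) + 1) / K) := Finset.sum_le_sum fun i _ => row i
    _ ≤ _ := step2
    _ ≤ (R ^ ((k : ℝ) / (k + 1))) ^ (((k : ℝ) + 1) / K) * R ^ ((l : ℝ) / K) := by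
        gcongr
        exact Finset.sum_nonneg fun i _ => Real.rpow_nonneg (hA0 i) _
    _ = R ^ (((k : ℝ) + l) / K) := by
        rw [← Real.rpow_mul hR, ← Real.rpow_add_of_nonneg hR (by positivity) (by positivity)]
        congr 1
        field_simp

/-- from an `L4`-`L2` bound to an `L2`-`Lp` bound -/
theorem bh_L2_Lp {Ω : Type*} [Fintype Ω] [Nonempty Ω] (F : Ω → ℝ) (hF : ∀ w, 0 ≤ F w) (D : ℝ)
    (hD : 0 ≤ D)
    (h4 : (∑ w, F w ^ 4) / Fintype.card Ω ≤ D * ((∑ w, F w ^ 2) / Fintype.card Ω) ^ 2)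
    (k : ℕ) (hk : 0 < k) :
    ((∑ w, F w ^ 2) / Fintype.card Ω) ^ ((k : ℝ) / (k + 1)) ≤
      D ^ ((1 : ℝ) / (k + 1)) * ((∑ w, F w ^ (2 * ((k : ℝ) / (k + 1)))) / Fintype.card Ω) := by
  have hk' : (0 : ℝ) < k := by exact_mod_cast hk
  set c : ℝ := ((Fintype.card Ω : ℕ) : ℝ) with hc
  have hc0 : 0 < c := by rw [hc]; exact_mod_cast Fintype.card_pos
  have hol := bh_holder Finset.univ (fun w => F w ^ (2 * ((k : ℝ) / (k + 1)))) (fun w => F w ^ 4)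
    (fun w => Real.rpow_nonneg (hF w) _) (fun w => by have := hF w; positivity)
    (a := (k + 1) / (k + 2)) (b := 1 / (k + 2)) (by positivity) (by positivity)
    (by field_simp; ring)
  have e : ∀ w, (F w ^ (2 * ((k : ℝ) / (k + 1)))) ^ (((k : ℝ) + 1) / (k + 2)) *
      (F w ^ 4) ^ ((1 : ℝ) / (k + 2)) = F w ^ 2 := fun w => by
    rw [← Real.rpow_natCast (F w) 4, ← Real.rpow_natCast (F w) 2, ← Real.rpow_mul (hF w),
      ← Real.rpow_mul (hF w), ← Real.rpow_add_of_nonneg (hF w) (by positivity) (by positivity)]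
    congr 1
    push_cast
    field_simp
    ring
  simp only [e] at hol
  set S2 := ∑ w, F w ^ 2 with hS2
  set Sp := ∑ w, F w ^ (2 * ((k : ℝ) / (k + 1))) with hSp
  set S4 := ∑ w, F w ^ 4 with hS4
  have n2 : 0 ≤ S2 := Finset.sum_nonneg fun w _ => by have := hF w; positivity
  have np : 0 ≤ Sp := Finset.sum_nonneg fun w _ => Real.rpow_nonneg (hF w) _
  have n4 : 0 ≤ S4 := Finset.sum_nonneg fun w _ => by have := hF w; positivity
  have hol2 : S2 / c ≤ (Sp / c) ^ (((k : ℝ) + 1) / (k + 2)) * (S4 / c) ^ ((1 : ℝ) / (k + 2)) := by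
    rw [Real.div_rpow np hc0.le, Real.div_rpow n4 hc0.le, div_mul_div_comm, ← Real.rpow_add hc0,
      show ((k : ℝ) + 1) / (k + 2) + 1 / (k + 2) = 1 by field_simp; ring, Real.rpow_one]
    gcongr
  set X := S2 / c
  set Y := Sp / c
  have hX : 0 ≤ X := by positivity
  have hY : 0 ≤ Y := by positivity
  have h5 : X ≤ Y ^ (((k : ℝ) + 1) / (k + 2)) * (D * X ^ 2) ^ ((1 : ℝ) / (k + 2)) :=
    hol2.trans (by gcongr)
  have h6 : X ^ ((k : ℝ) + 2) ≤ Y ^ ((k : ℝ) + 1) * (D * X ^ 2) := by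
    have := Real.rpow_le_rpow hX h5 (z := (k : ℝ) + 2) (by positivity)
    rwa [Real.mul_rpow (by positivity) (by positivity), ← Real.rpow_mul hY,
      ← Real.rpow_mul (by positivity), div_mul_cancel₀ _ (by positivity),
      div_mul_cancel₀ _ (by positivity), Real.rpow_one] at this
  rcases hX.eq_or_lt with h0 | hX'
  · rw [← h0, Real.zero_rpow (by positivity)]
    positivity
  have h7 : X ^ (k : ℝ) ≤ D * Y ^ ((k : ℝ) + 1) := by
    rw [Real.rpow_add hX', show X ^ (2 : ℝ) = X ^ 2 by norm_cast] at h6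
    have : 0 < X ^ 2 := by positivity
    nlinarith
  have h8 := Real.rpow_le_rpow (by positivity) h7 (z := 1 / ((k : ℝ) + 1)) (by positivity)
  rw [Real.mul_rpow hD (by positivity), ← Real.rpow_mul hX, ← Real.rpow_mul hY,
    mul_one_div_cancel (by positivity), Real.rpow_one, mul_one_div] at h8
  exact h8

/-- The torus, discretized -/
theorem bh_torus (n N : ℕ) (hN : 0 < N) : ∃ (Ω : Type) (_ : Fintype Ω) (_ : Nonempty Ω)
    (z : Ω → Fin n → ℂ), (∀ w i, ‖z w i‖ = 1) ∧
    ∀ α β : Fin n →₀ ℕ, (∀ i, α i < N) → (∀ i, β i < N) →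
      ∑ w, (∏ i, z w i ^ α i) * (starRingEnd ℂ) (∏ i, z w i ^ β i) =
        if α = β then (Fintype.card Ω : ℂ) else 0 := by
  classical
  set ζ : ℂ := Complex.exp (2 * Real.pi * Complex.I / N) with hζ
  have hprim : IsPrimitiveRoot ζ N := Complex.isPrimitiveRoot_exp N hN.ne'
  have hnorm : ‖ζ‖ = 1 := hprim.norm'_eq_one hN.ne'
  have hconj : (starRingEnd ℂ) ζ = ζ⁻¹ := (Complex.inv_eq_conj hnorm).symm
  have h0 : ζ ≠ 0 := by rw [← norm_ne_zero_iff, hnorm]; exact one_ne_zero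
  have : Nonempty (Fin N) := ⟨⟨0, hN⟩⟩
  refine ⟨Fin n → Fin N, inferInstance, inferInstance, fun w i => ζ ^ (w i : ℕ), ?_, ?_⟩
  · intro w i
    rw [norm_pow, hnorm, one_pow]
  · intro α β hα hβ
    have key : ∀ a b : ℕ, a < N → b < N →
        ∑ j : Fin N, (ζ ^ (j : ℕ)) ^ a * (starRingEnd ℂ) ((ζ ^ (j : ℕ)) ^ b) =
          if a = b then (N : ℂ) else 0 := by
      intro a b ha hb
      have e : ∀ j : Fin N, (ζ ^ (j : ℕ)) ^ a * (starRingEnd ℂ) ((ζ ^ (j : ℕ)) ^ b) =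
          (ζ ^ a * (ζ ^ b)⁻¹) ^ (j : ℕ) := by
        intro j
        rw [map_pow, map_pow, hconj, mul_pow, ← pow_mul, ← pow_mul, ← pow_mul, inv_pow, inv_pow,
          ← pow_mul, mul_comm a, mul_comm b]
      rw [Finset.sum_congr rfl fun j _ => e j,
        Fin.sum_univ_eq_sum_range (fun j => (ζ ^ a * (ζ ^ b)⁻¹) ^ j) N]
      split_ifs with hab
      · subst hab
        rw [mul_inv_cancel₀ (pow_ne_zero _ h0)]
        simp
      · have hne : ζ ^ a * (ζ ^ b)⁻¹ ≠ 1 := by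
          intro h
          rw [mul_inv_eq_one₀ (pow_ne_zero _ h0)] at h
          exact hab (hprim.pow_inj ha hb h)
        rw [geom_sum_eq hne]
        have : (ζ ^ a * (ζ ^ b)⁻¹) ^ N = 1 := by
          rw [mul_pow, inv_pow, ← pow_mul, ← pow_mul, mul_comm a, mul_comm b, pow_mul, pow_mul,
            hprim.pow_eq_one]
          simp
        rw [this]; simp
    have e2 : ∀ w : Fin n → Fin N, (∏ i, (ζ ^ (w i : ℕ)) ^ α i) *
        (starRingEnd ℂ) (∏ i, (ζ ^ (w i : ℕ)) ^ β i) =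
        ∏ i, ((ζ ^ (w i : ℕ)) ^ α i * (starRingEnd ℂ) ((ζ ^ (w i : ℕ)) ^ β i)) := by
      intro w
      rw [map_prod, Finset.prod_mul_distrib]
    rw [Finset.sum_congr rfl fun w _ => e2 w]
    have := Finset.prod_univ_sum (fun _ : Fin n => (Finset.univ : Finset (Fin N)))
      (fun i (j : Fin N) => (ζ ^ (j : ℕ)) ^ α i * (starRingEnd ℂ) ((ζ ^ (j : ℕ)) ^ β i))
    rw [Fintype.piFinset_univ] at this
    rw [← this, Finset.prod_congr rfl fun i _ => key (α i) (β i) (hα i) (hβ i)]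
    split_ifs with h
    · subst h
      simp
    · obtain ⟨i, hi⟩ : ∃ i, α i ≠ β i := by
        by_contra hh
        push Not at hh
        exact h (Finsupp.ext hh)
      exact Finset.prod_eq_zero (Finset.mem_univ i) (by simp [hi])

theorem bh_cauchy (m : ℕ) (a : ℕ → ℂ) (r M : ℝ) (hr : 0 < r)
    (h : ∀ s : ℂ, ‖s‖ = r → ‖∑ j ∈ Finset.range (m + 1), s ^ j * a j‖ ≤ M) (j : ℕ) (hj : j ≤ m) :
    r ^ j * ‖a j‖ ≤ M := by
  obtain ⟨Ω, hf, hne, z, hz, ho⟩ := bh_torus 1 (m + 1) (Nat.succ_pos m)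
  have ho' : ∀ p q : ℕ, p ≤ m → q ≤ m → ∑ w, z w 0 ^ p * (starRingEnd ℂ) (z w 0 ^ q) =
      if p = q then (Fintype.card Ω : ℂ) else 0 := by
    intro p q hp hq
    have := ho (Finsupp.single 0 p) (Finsupp.single 0 q)
      (fun i => by rw [Subsingleton.elim i 0]; simp; omega)
      (fun i => by rw [Subsingleton.elim i 0]; simp; omega)
    simpa [Finsupp.single_left_inj, (Finsupp.single_injective (0 : Fin 1)).eq_iff] using this
  have hc : (0 : ℝ) < Fintype.card Ω := by exact_mod_cast Fintype.card_pos
  have e : ∑ w, (∑ i ∈ Finset.range (m + 1), (r * z w 0) ^ i * a i) * (starRingEnd ℂ) (z w 0 ^ j)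
      = Fintype.card Ω * (r ^ j * a j) := by
    simp only [Finset.sum_mul]
    rw [Finset.sum_comm]
    have : ∀ i ∈ Finset.range (m + 1), ∑ w, (r * z w 0) ^ i * a i * (starRingEnd ℂ) (z w 0 ^ j)
        = if i = j then (Fintype.card Ω : ℂ) * (r ^ j * a j) else 0 := by
      intro i hi
      have hi' : i ≤ m := by simpa [Nat.lt_succ_iff] using hi
      have : ∀ w, (r * z w 0) ^ i * a i * (starRingEnd ℂ) (z w 0 ^ j) =
          (r ^ i * a i) * (z w 0 ^ i * (starRingEnd ℂ) (z w 0 ^ j)) := fun w => by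
        rw [mul_pow]; ring
      rw [Finset.sum_congr rfl fun w _ => this w, ← Finset.mul_sum, ho' i j hi' hj]
      split_ifs with hij
      · subst hij; ring
      · simp
    rw [Finset.sum_congr rfl this, Finset.sum_ite_eq' ]
    simp [hj]
  have h2 : ‖(Fintype.card Ω : ℂ) * (r ^ j * a j)‖ ≤ Fintype.card Ω * M := by
    rw [← e]
    refine (norm_sum_le _ _).trans ?_
    refine (Finset.sum_le_card_nsmul _ _ M ?_).trans (by simp)
    intro w _
    rw [norm_mul, RCLike.norm_conj, norm_pow, hz, one_pow, mul_one]
    exact h _ (by rw [norm_mul, hz, Complex.norm_real, Real.norm_of_nonneg hr.le, mul_one])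
  rw [norm_mul, norm_mul, norm_pow, Complex.norm_real, Real.norm_of_nonneg hr.le,
    Complex.norm_natCast] at h2
  exact le_of_mul_le_mul_left h2 hc

/-- generic linear form -/
noncomputable def bhLin {n : ℕ} (z : Fin n → ℂ) : MvPolynomial (Fin n) ℂ := ∑ i, z i • X i

theorem bhLin_comb {n : ℕ} (c d : ℂ) (y z : Fin n → ℂ) :
    bhLin (fun i => c * y i + d * z i) = c • bhLin y + d • bhLin z := by
  simp only [bhLin, add_smul, mul_smul, Finset.sum_add_distrib, Finset.smul_sum]

theorem bhLin_smul {n : ℕ} (c : ℂ) (y : Fin n → ℂ) :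
    bhLin (fun i => c * y i) = c • bhLin y := by
  simp only [bhLin, mul_smul, Finset.smul_sum]

theorem bh_binom {n : ℕ} (Λ : MvPolynomial (Fin n) ℂ →ₗ[ℂ] ℂ) (m : ℕ) (s : ℂ)
    (p q : MvPolynomial (Fin n) ℂ) :
    Λ ((s • p + q) ^ m) =
      ∑ j ∈ Finset.range (m + 1), s ^ j * ((m.choose j : ℂ) * Λ (p ^ j * q ^ (m - j))) := by
  rw [add_pow, map_sum]
  refine Finset.sum_congr rfl fun j _ => ?_
  rw [smul_pow, smul_mul_assoc, smul_mul_assoc, map_smul, smul_eq_mul]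
  congr 1
  rw [mul_comm _ ((m.choose j : ℕ) : MvPolynomial (Fin n) ℂ), ← nsmul_eq_mul, map_nsmul,
    nsmul_eq_mul]

theorem bh_polar {n : ℕ} (Λ : MvPolynomial (Fin n) ℂ →ₗ[ℂ] ℂ) (m : ℕ) (hm : 0 < m) (M : ℝ)
    (h : ∀ z : Fin n → ℂ, (∀ i, ‖z i‖ ≤ 1) → ‖Λ (bhLin z ^ m)‖ ≤ M) (k d : ℕ) (hkd : k + d = m)
    (y z : Fin n → ℂ) (hy : ∀ i, ‖y i‖ ≤ 1) (hz : ∀ i, ‖z i‖ ≤ 1) :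
    ‖Λ (bhLin y ^ k * bhLin z ^ d)‖ ≤ (m : ℝ) ^ k * Real.exp 1 * M := by
  have hm' : (0 : ℝ) < m := by exact_mod_cast hm
  have hM : 0 ≤ M := (norm_nonneg _).trans (h 0 (by simp))
  have hb : ∀ s : ℂ, ‖s‖ = 1 / (m : ℝ) → ‖∑ j ∈ Finset.range (m + 1),
      s ^ j * ((m.choose j : ℂ) * Λ (bhLin y ^ j * bhLin z ^ (m - j)))‖ ≤ Real.exp 1 * M := by
    intro s hs
    rw [← bh_binom]
    set R : ℝ := 1 + 1 / m with hR
    have hRp : 0 < R := by positivity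
    have hRc : (R : ℂ) ≠ 0 := by exact_mod_cast hRp.ne'
    set u : Fin n → ℂ := fun i => (s / R) * y i + (1 / R : ℂ) * z i with hu
    have e : s • bhLin y + bhLin z = (R : ℂ) • bhLin u := by
      rw [hu, bhLin_comb, smul_add, smul_smul, smul_smul, mul_div_cancel₀ _ hRc,
        mul_one_div_cancel hRc, one_smul]
    rw [e, smul_pow, map_smul, norm_smul, norm_pow, Complex.norm_real, Real.norm_of_nonneg hRp.le]
    have h1 : R ^ m ≤ Real.exp 1 := by
      have : R ≤ Real.exp (1 / m) := by rw [hR, add_comm]; exact Real.add_one_le_exp _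
      calc R ^ m ≤ Real.exp (1 / m) ^ m := by gcongr
        _ = Real.exp 1 := by rw [← Real.exp_nat_mul, mul_one_div_cancel hm'.ne']
    refine mul_le_mul h1 (h u fun i => ?_) (norm_nonneg _) (Real.exp_pos 1).le
    calc ‖u i‖ ≤ ‖s / R * y i‖ + ‖(1 / R : ℂ) * z i‖ := norm_add_le _ _
      _ = (1 / m) / R * ‖y i‖ + 1 / R * ‖z i‖ := by
        rw [norm_mul, norm_mul, norm_div, norm_div, Complex.norm_real,
          Real.norm_of_nonneg hRp.le, hs, norm_one]
      _ ≤ (1 / m) / R * 1 + 1 / R * 1 := by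
        gcongr
        · exact hy i
        · exact hz i
      _ = 1 := by rw [hR]; field_simp; ring
  have hc := bh_cauchy m _ (1 / m) _ (by positivity) hb k (by omega)
  rw [show m - k = d by omega, norm_mul, Complex.norm_natCast] at hc
  have hch : (1 : ℝ) ≤ m.choose k := by exact_mod_cast Nat.choose_pos (by omega)
  have h3 : (1 / (m : ℝ)) ^ k * ‖Λ (bhLin y ^ k * bhLin z ^ d)‖ ≤ Real.exp 1 * M := by
    refine le_trans ?_ hc
    gcongr
    exact le_mul_of_one_le_left (norm_nonneg _) hch
  rw [one_div, inv_pow, inv_mul_le_iff₀ (by positivity)] at h3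
  linarith

theorem bh_complexify {n : ℕ} (Λ : MvPolynomial (Fin n) ℂ →ₗ[ℂ] ℂ) (m : ℕ) (M : ℝ)
    (h : ∀ x : Fin n → ℝ, (∀ i, |x i| ≤ 1) → ‖Λ (bhLin (fun i => (x i : ℂ)) ^ m)‖ ≤ M)
    (z : Fin n → ℂ) (hz : ∀ i, ‖z i‖ ≤ 1) : ‖Λ (bhLin z ^ m)‖ ≤ 2 ^ m * M := by
  have hb : ∀ s : ℂ, ‖s‖ = 1 → ‖∑ j ∈ Finset.range (m + 1),
      s ^ j * ((m.choose j : ℂ) *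
        Λ (bhLin z ^ j * bhLin (fun i => (starRingEnd ℂ) (z i)) ^ (m - j)))‖ ≤ 2 ^ m * M := by
    intro s hs
    rw [← bh_binom]
    obtain ⟨w, hw⟩ : ∃ w : ℂ, w ^ 2 = s := IsAlgClosed.exists_pow_nat_eq s (by norm_num)
    have hwn : ‖w‖ = 1 := by
      have : ‖w‖ ^ 2 = 1 := by rw [← norm_pow, hw, hs]
      exact (pow_eq_one_iff_of_nonneg (norm_nonneg _) (by norm_num)).1 this
    set x : Fin n → ℝ := fun i => (w * z i).re with hx
    have e : s • bhLin z + bhLin (fun i => (starRingEnd ℂ) (z i)) =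
        (2 * w) • bhLin (fun i => (x i : ℂ)) := by
      rw [← bhLin_smul (2 * w)]
      have := bhLin_comb s 1 z (fun i => (starRingEnd ℂ) (z i))
      rw [one_smul] at this
      rw [← this]
      congr 1
      funext i
      have h1 : (x i : ℂ) = (w * z i + (starRingEnd ℂ) (w * z i)) / 2 := Complex.re_eq_add_conj _
      have h2 : w * (starRingEnd ℂ) w = 1 := by
        rw [Complex.mul_conj, Complex.normSq_eq_norm_sq, hwn]; simp
      rw [h1, map_mul, ← hw]
      linear_combination (-(starRingEnd ℂ) (z i)) * h2
    rw [e, smul_pow, map_smul, norm_smul, norm_pow, norm_mul, hwn]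
    simp only [Complex.norm_ofNat, mul_one]
    gcongr
    apply h
    intro i
    calc |x i| ≤ ‖w * z i‖ := Complex.abs_re_le_norm _
      _ ≤ 1 := by rw [norm_mul, hwn, one_mul]; exact hz i
  have hc := bh_cauchy m _ 1 _ one_pos hb m le_rfl
  simpa using hc

theorem bh_parseval {n N : ℕ} {Ω : Type} [Fintype Ω] (z : Ω → Fin n → ℂ)
    (ho : ∀ α β : Fin n →₀ ℕ, (∀ i, α i < N) → (∀ i, β i < N) →
      ∑ w, (∏ i, z w i ^ α i) * (starRingEnd ℂ) (∏ i, z w i ^ β i) =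
        if α = β then (Fintype.card Ω : ℂ) else 0)
    (S : Finset (Fin n →₀ ℕ)) (hS : ∀ α ∈ S, ∀ i, α i < N) (q : (Fin n →₀ ℕ) → ℂ) :
    ∑ w, ‖∑ α ∈ S, q α * ∏ i, z w i ^ α i‖ ^ 2 = Fintype.card Ω * ∑ α ∈ S, ‖q α‖ ^ 2 := by
  have hn : ∀ c : ℂ, ((‖c‖ ^ 2 : ℝ) : ℂ) = c * (starRingEnd ℂ) c := fun c => by
    rw [Complex.mul_conj, Complex.normSq_eq_norm_sq]
  apply Complex.ofReal_injective
  push_cast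
  have hn' : ∀ c : ℂ, (‖c‖ : ℂ) ^ 2 = c * (starRingEnd ℂ) c := fun c => by
    rw [← hn]; push_cast; rfl
  simp only [hn']
  have e : ∀ w, (∑ α ∈ S, q α * ∏ i, z w i ^ α i) *
      (starRingEnd ℂ) (∑ α ∈ S, q α * ∏ i, z w i ^ α i) =
      ∑ α ∈ S, ∑ β ∈ S, (q α * (starRingEnd ℂ) (q β)) *
        ((∏ i, z w i ^ α i) * (starRingEnd ℂ) (∏ i, z w i ^ β i)) := by
    intro w
    rw [map_sum, Finset.sum_mul_sum]
    refine Finset.sum_congr rfl fun α _ => Finset.sum_congr rfl fun β _ => ?_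
    rw [map_mul]; ring
  rw [Finset.sum_congr rfl fun w _ => e w, Finset.sum_comm, Finset.mul_sum]
  refine Finset.sum_congr rfl fun α hα => ?_
  rw [Finset.sum_comm]
  have e2 : ∀ β ∈ S, ∑ w, (q α * (starRingEnd ℂ) (q β)) *
        ((∏ i, z w i ^ α i) * (starRingEnd ℂ) (∏ i, z w i ^ β i)) =
      if α = β then (Fintype.card Ω : ℂ) * (q α * (starRingEnd ℂ) (q α)) else 0 := by
    intro β hβ
    rw [← Finset.mul_sum, ho α β (hS α hα) (hS β hβ)]
    split_ifs with h
    · subst h; ring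
    · simp
  rw [Finset.sum_congr rfl e2, Finset.sum_ite_eq]
  simp [hα]

theorem bh_fiber_card {n d : ℕ} (S : Finset (Fin n →₀ ℕ)) (γ : Fin n →₀ ℕ)
    (hγ : ∑ i, γ i = d) :
    ((S ×ˢ S).filter (fun x => x.1 + x.2 = γ)).card ≤ 2 ^ d := by
  classical
  calc ((S ×ˢ S).filter (fun x => x.1 + x.2 = γ)).card ≤ (Finset.Iic γ).card := by
        refine Finset.card_le_card_of_injOn (fun x => x.1) ?_ ?_
        · intro x hx
          simp only [Finset.coe_filter, Set.mem_ofPred_eq] at hx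
          simp only [Finset.coe_Iic, Set.mem_Iic]
          rw [← hx.2]
          exact le_self_add
        · intro x hx y hy hxy
          simp only [Finset.coe_filter, Set.mem_ofPred_eq] at hx hy
          have h1 : x.1 = y.1 := hxy
          refine Prod.ext h1 ?_
          have := hx.2.trans hy.2.symm
          rw [h1] at this
          exact add_left_cancel this
    _ = ∏ i ∈ γ.support, (γ i + 1) := by
        rw [Finsupp.card_Iic]
        simp
    _ ≤ ∏ i ∈ γ.support, 2 ^ γ i := Finset.prod_le_prod' fun i _ => Nat.lt_two_pow_self
    _ = 2 ^ ∑ i ∈ γ.support, γ i := Finset.prod_pow_eq_pow_sum _ _ _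
    _ ≤ 2 ^ d := by
        refine Nat.pow_le_pow_right (by norm_num) ?_
        rw [← hγ]
        exact Finset.sum_le_sum_of_subset (Finset.subset_univ _)

theorem bh_L4 {n N d : ℕ} (hN : 2 * d < N) {Ω : Type} [Fintype Ω] [Nonempty Ω] (z : Ω → Fin n → ℂ)
    (ho : ∀ α β : Fin n →₀ ℕ, (∀ i, α i < N) → (∀ i, β i < N) →
      ∑ w, (∏ i, z w i ^ α i) * (starRingEnd ℂ) (∏ i, z w i ^ β i) =
        if α = β then (Fintype.card Ω : ℂ) else 0)
    (S : Finset (Fin n →₀ ℕ)) (hS : ∀ α ∈ S, ∑ i, α i = d) (q : (Fin n →₀ ℕ) → ℂ) :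
    (∑ w, ‖∑ α ∈ S, q α * ∏ i, z w i ^ α i‖ ^ 4) / Fintype.card Ω ≤
      4 ^ d * ((∑ w, ‖∑ α ∈ S, q α * ∏ i, z w i ^ α i‖ ^ 2) / Fintype.card Ω) ^ 2 := by
  classical
  have hc : (0 : ℝ) < Fintype.card Ω := by exact_mod_cast Fintype.card_pos
  have hle : ∀ (α : Fin n →₀ ℕ) i, α i ≤ ∑ i, α i := fun α i =>
    Finset.single_le_sum (f := fun i => α i) (fun _ _ => Nat.zero_le _) (Finset.mem_univ i)
  have hlt : ∀ α ∈ S, ∀ i, α i < N := fun α hα i => by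
    have := hle α i; rw [hS α hα] at this; omega
  rw [bh_parseval z ho S hlt q, mul_div_cancel_left₀ _ hc.ne']
  set T := (S ×ˢ S).image (fun x => x.1 + x.2) with hT
  have hTd : ∀ γ ∈ T, ∑ i, γ i = 2 * d := by
    intro γ hγ
    obtain ⟨x, hx, rfl⟩ := Finset.mem_image.1 hγ
    rw [Finset.mem_product] at hx
    simp only [Finsupp.add_apply, Finset.sum_add_distrib, hS _ hx.1, hS _ hx.2]
    ring
  have hTlt : ∀ γ ∈ T, ∀ i, γ i < N := fun γ hγ i => by
    have := hle γ i; rw [hTd γ hγ] at this; omega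
  set b : (Fin n →₀ ℕ) → ℂ := fun γ =>
    ∑ x ∈ (S ×ˢ S).filter (fun x => x.1 + x.2 = γ), q x.1 * q x.2 with hb
  have hsq : ∀ w, ‖∑ α ∈ S, q α * ∏ i, z w i ^ α i‖ ^ 4 =
      ‖∑ γ ∈ T, b γ * ∏ i, z w i ^ γ i‖ ^ 2 := by
    intro w
    have : (∑ α ∈ S, q α * ∏ i, z w i ^ α i) ^ 2 = ∑ γ ∈ T, b γ * ∏ i, z w i ^ γ i := by
      rw [sq, Finset.sum_mul_sum, ← Finset.sum_product',
        ← Finset.sum_fiberwise_of_maps_to (s := S ×ˢ S) (t := T) (g := fun x => x.1 + x.2)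
          (fun x hx => Finset.mem_image_of_mem _ hx)]
      refine Finset.sum_congr rfl fun γ _ => ?_
      rw [hb, Finset.sum_mul]
      refine Finset.sum_congr rfl fun x hx => ?_
      rw [← (Finset.mem_filter.1 hx).2]
      simp only [Finsupp.add_apply, pow_add, Finset.prod_mul_distrib]
      ring
    rw [← this, norm_pow, ← pow_mul]
  simp only [hsq]
  rw [bh_parseval z ho T hTlt b, mul_div_cancel_left₀ _ hc.ne']
  calc ∑ γ ∈ T, ‖b γ‖ ^ 2
      ≤ ∑ γ ∈ T, 4 ^ d * ∑ x ∈ (S ×ˢ S).filter (fun x => x.1 + x.2 = γ),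
          (‖q x.1‖ * ‖q x.2‖) ^ 2 := by
        refine Finset.sum_le_sum fun γ hγ => ?_
        calc ‖b γ‖ ^ 2 ≤ (∑ x ∈ (S ×ˢ S).filter (fun x => x.1 + x.2 = γ),
            ‖q x.1‖ * ‖q x.2‖) ^ 2 := by
              gcongr
              refine (norm_sum_le _ _).trans (le_of_eq ?_)
              simp
          _ ≤ _ := sq_sum_le_card_mul_sum_sq
          _ ≤ _ := by
              gcongr
              have := bh_fiber_card S γ (hTd γ hγ)
              rw [pow_mul] at this
              exact_mod_cast this
    _ = 4 ^ d * (∑ α ∈ S, ‖q α‖ ^ 2) ^ 2 := by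
        rw [← Finset.mul_sum, Finset.sum_fiberwise_of_maps_to
          (fun x hx => Finset.mem_image_of_mem _ hx), sq (∑ α ∈ S, ‖q α‖ ^ 2),
          Finset.sum_mul_sum, ← Finset.sum_product']
        simp only [mul_pow]

noncomputable def bhTau {n d : ℕ} (t : Fin d → Fin n) : Fin n →₀ ℕ :=
  ∑ j, Finsupp.single (t j) 1

open Classical in
noncomputable def bhW {n : ℕ} (d : ℕ) (α : Fin n →₀ ℕ) : ℕ :=
  (Finset.univ.filter (fun t : Fin d → Fin n => bhTau t = α)).card

theorem bhTau_deg {n d : ℕ} (t : Fin d → Fin n) : ∑ i, bhTau t i = d := by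
  simp only [bhTau, Finsupp.coe_finsetSum, Finset.sum_apply]
  rw [Finset.sum_comm]
  simp [Finsupp.single_apply]

theorem bhTau_prod {n d : ℕ} (t : Fin d → Fin n) (z : Fin n → ℂ) :
    ∏ i, z i ^ bhTau t i = ∏ j, z (t j) := by
  simp only [bhTau, Finsupp.coe_finsetSum, Finset.sum_apply]
  simp only [← Finset.prod_pow_eq_pow_sum]
  rw [Finset.prod_comm]
  simp [Finsupp.single_apply]

theorem bhTau_append {n k l : ℕ} (u : Fin k → Fin n) (v : Fin l → Fin n) :
    bhTau (Fin.append u v) = bhTau u + bhTau v := by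
  simp [bhTau, Fin.sum_univ_add]

theorem bhTau_cons {n d : ℕ} (i : Fin n) (t : Fin d → Fin n) :
    bhTau (Fin.cons i t : Fin (d + 1) → Fin n) = Finsupp.single i 1 + bhTau t := by
  simp [bhTau, Fin.sum_univ_succ]

theorem bhTau_one {n : ℕ} (u : Fin 1 → Fin n) : bhTau u = Finsupp.single (u 0) 1 := by
  simp [bhTau]

theorem bh_sum_append {n k l : ℕ} {E : Type*} [AddCommMonoid E] (F : (Fin n →₀ ℕ) → E) :
    ∑ t : Fin (k + l) → Fin n, F (bhTau t) =
      ∑ u : Fin k → Fin n, ∑ v : Fin l → Fin n, F (bhTau u + bhTau v) := by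
  rw [← Fintype.sum_prod_type', ← (Fin.appendEquiv k l).sum_comp]
  refine Finset.sum_congr rfl fun x _ => ?_
  rw [← bhTau_append]; rfl

theorem bh_sum_comp {n d : ℕ} {E : Type*} [AddCommMonoid E] (F : (Fin n →₀ ℕ) → E) :
    ∑ t : Fin d → Fin n, F (bhTau t) =
      ∑ α ∈ Finset.univ.image (bhTau : (Fin d → Fin n) → _), bhW d α • F α := by
  classical
  rw [Finset.sum_comp F bhTau]
  refine Finset.sum_congr (by congr) fun α _ => ?_
  congr 1

theorem bhW_pos {n d : ℕ} (t : Fin d → Fin n) : 0 < bhW d (bhTau t) := by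
  classical
  exact Finset.card_pos.2 ⟨t, by simp⟩

theorem bhTau_surj {n : ℕ} (d : ℕ) (α : Fin n →₀ ℕ) (h : ∑ i, α i = d) :
    ∃ t : Fin d → Fin n, bhTau t = α := by
  induction d generalizing α with
  | zero =>
    refine ⟨Fin.elim0, ?_⟩
    ext i
    have : α i = 0 := by
      rw [Finset.sum_eq_zero_iff] at h
      exact h i (Finset.mem_univ i)
    simp [bhTau, this]
  | succ d ih =>
    obtain ⟨i, hi⟩ : ∃ i, α i ≠ 0 := by
      by_contra hh
      push Not at hh
      simp [hh] at h
    have hle : Finsupp.single i 1 ≤ α := by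
      rw [Finsupp.single_le_iff]; omega
    have e : Finsupp.single i 1 + (α - Finsupp.single i 1) = α := add_tsub_cancel_of_le hle
    obtain ⟨t, ht⟩ := ih (α - Finsupp.single i 1) (by
      have h2 : ∑ j, (Finsupp.single i 1 + (α - Finsupp.single i 1) : Fin n →₀ ℕ) j = d + 1 := by
        rw [e, h]
      simp only [Finsupp.add_apply, Finset.sum_add_distrib] at h2
      have h3 : ∑ j, (Finsupp.single i 1 : Fin n →₀ ℕ) j = 1 := by simp [Finsupp.single_apply]
      omega)
    exact ⟨Fin.cons i t, by rw [bhTau_cons, ht, e]⟩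

theorem bhTau_removeNth {n d : ℕ} (t : Fin (d + 1) → Fin n) (p : Fin (d + 1)) :
    bhTau t = Finsupp.single (t p) 1 + bhTau (p.removeNth t) := by
  simp only [bhTau, Fin.sum_univ_succAbove _ p]
  rfl

theorem bhW_cons {n d : ℕ} (i : Fin n) (β : Fin n →₀ ℕ) :
    bhW (d + 1) (Finsupp.single i 1 + β) ≤ (d + 1) * bhW d β := by
  classical
  unfold bhW
  have : (d + 1) * (Finset.univ.filter (fun t : Fin d → Fin n => bhTau t = β)).card =
      ((Finset.univ : Finset (Fin (d + 1))) ×ˢ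
        (Finset.univ.filter (fun t : Fin d → Fin n => bhTau t = β))).card := by
    rw [Finset.card_product]; simp
  rw [this]
  refine Finset.card_le_card_of_surjOn
    (fun x : Fin (d + 1) × (Fin d → Fin n) => (Fin.insertNth x.1 i x.2 : Fin (d + 1) → Fin n)) ?_
  intro t ht
  simp only [Finset.coe_filter, Set.mem_ofPred_eq, Finset.mem_univ, true_and] at ht
  obtain ⟨p, hp⟩ : ∃ p, t p = i := by
    by_contra hh
    push Not at hh
    have h1 : bhTau t i = 0 := by
      simp only [bhTau, Finsupp.coe_finsetSum, Finset.sum_apply]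
      exact Finset.sum_eq_zero fun j _ => by simp [hh j]
    rw [ht] at h1
    simp at h1
  refine ⟨(p, p.removeNth t), ?_, ?_⟩
  · rw [bhTau_removeNth t p, hp] at ht
    simpa using add_left_cancel ht
  · simp only
    rw [← hp]
    exact Fin.insertNth_self_removeNth p t

theorem bhW_add {n d : ℕ} (k : ℕ) (u : Fin k → Fin n) (β : Fin n →₀ ℕ) (m : ℕ)
    (hm : k + d = m) : bhW m (bhTau u + β) ≤ m ^ k * bhW d β := by
  induction k generalizing m with
  | zero => 
    obtain rfl : d = m := by omega
    simp [bhTau]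
  | succ k ih =>
    obtain ⟨m, rfl⟩ : ∃ m', m = m' + 1 := ⟨k + d, by omega⟩
    rw [← Fin.cons_self_tail u, bhTau_cons, add_assoc]
    refine (bhW_cons _ _).trans ?_
    refine (Nat.mul_le_mul_left _ (ih (Fin.tail u) m (by omega))).trans ?_
    rw [pow_succ', mul_assoc]
    gcongr
    omega

theorem bhLin_pow {n : ℕ} (z : Fin n → ℂ) (d : ℕ) :
    bhLin z ^ d = ∑ t : Fin d → Fin n, (∏ j, z (t j)) • monomial (bhTau t) (1 : ℂ) := by
  rw [bhLin, Fintype.sum_pow]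
  refine Finset.sum_congr rfl fun t _ => ?_
  rw [Finset.prod_smul]
  congr 1
  rw [bhTau, monomial_sum_one]
  rfl

noncomputable def bhS {n : ℕ} (k d : ℕ) (h : (Fin n →₀ ℕ) → ℝ) : ℝ :=
  ∑ u : Fin k → Fin n, (∑ v : Fin d → Fin n, h (bhTau u + bhTau v)) ^ ((k : ℝ) / (k + 1))

theorem bhS_merge {n : ℕ} (k l d : ℕ) (hk : 0 < k) (hl : 0 < l) (h : (Fin n →₀ ℕ) → ℝ)
    (hh : ∀ α, 0 ≤ h α) (R : ℝ) (hR : 0 ≤ R)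
    (h1 : bhS k (l + d) h ≤ R ^ ((k : ℝ) / (k + 1)))
    (h2 : bhS l (k + d) h ≤ R ^ ((l : ℝ) / (l + 1))) :
    bhS (k + l) d h ≤ R ^ (((k + l : ℕ) : ℝ) / ((k + l : ℕ) + 1)) := by
  have := bh_merge (fun (u : Fin k → Fin n) (u' : Fin l → Fin n) =>
    ∑ v : Fin d → Fin n, h (bhTau u + bhTau u' + bhTau v))
    (fun u u' => Finset.sum_nonneg fun _ _ => hh _) k l hk hl R hR ?_ ?_
  · refine le_trans (le_of_eq ?_) this
    unfold bhS
    exact bh_sum_append (fun α => (∑ v : Fin d → Fin n, h (α + bhTau v)) ^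
      (((k + l : ℕ) : ℝ) / ((k + l : ℕ) + 1)))
  · refine le_trans (le_of_eq ?_) h1
    unfold bhS
    refine Finset.sum_congr rfl fun u _ => ?_
    rw [bh_sum_append (fun α => h (bhTau u + α))]
    simp only [add_assoc]
  · refine le_trans (le_of_eq ?_) h2
    unfold bhS
    refine Finset.sum_congr rfl fun u _ => ?_
    rw [bh_sum_append (fun α => h (bhTau u + α))]
    congr 1
    refine Finset.sum_congr rfl fun x _ => Finset.sum_congr rfl fun y _ => ?_
    congr 1
    abel

theorem bhS_chain {n : ℕ} (k0 m : ℕ) (hk0 : 0 < k0) (h : (Fin n →₀ ℕ) → ℝ)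
    (hh : ∀ α, 0 ≤ h α) (R : ℝ) (hR : 0 ≤ R)
    (hyp : ∀ k d, k0 ≤ k → k < 2 * k0 → k + d = m → bhS k d h ≤ R ^ ((k : ℝ) / (k + 1))) :
    ∀ j d, k0 ≤ j → j + d = m → bhS j d h ≤ R ^ ((j : ℝ) / (j + 1)) := by
  intro j
  induction j using Nat.strong_induction_on with
  | _ j ih =>
    intro d hj hjd
    by_cases hlt : j < 2 * k0
    · exact hyp j d hj hlt hjd
    · obtain ⟨l, rfl⟩ : ∃ l, j = k0 + l := ⟨j - k0, by omega⟩
      exact bhS_merge k0 l d hk0 (by omega) h hh R hR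
        (ih k0 (by omega) _ le_rfl (by omega)) (ih l (by omega) _ (by omega) (by omega))

theorem bh_tuple {n N d : ℕ} (hN : 2 * d < N) {Ω : Type} [Fintype Ω] [Nonempty Ω]
    (z : Ω → Fin n → ℂ)
    (ho : ∀ α β : Fin n →₀ ℕ, (∀ i, α i < N) → (∀ i, β i < N) →
      ∑ w, (∏ i, z w i ^ α i) * (starRingEnd ℂ) (∏ i, z w i ^ β i) =
        if α = β then (Fintype.card Ω : ℂ) else 0)
    (B : (Fin n →₀ ℕ) → ℂ) (k : ℕ) (hk : 0 < k) :
    (∑ v : Fin d → Fin n, (bhW d (bhTau v) : ℝ) * ‖B (bhTau v)‖ ^ 2) ^ ((k : ℝ) / (k + 1)) ≤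
      ((4 : ℝ) ^ d) ^ ((1 : ℝ) / (k + 1)) *
      ((∑ w, ‖∑ v : Fin d → Fin n, (∏ j, z w (v j)) * B (bhTau v)‖ ^ (2 * ((k : ℝ) / (k + 1)))) /
        Fintype.card Ω) := by
  classical
  have hc : (0 : ℝ) < Fintype.card Ω := by exact_mod_cast Fintype.card_pos
  set S := Finset.univ.image (bhTau : (Fin d → Fin n) → _) with hS
  have hSd : ∀ α ∈ S, ∑ i, α i = d := by
    intro α hα
    obtain ⟨t, _, rfl⟩ := Finset.mem_image.1 hα
    exact bhTau_deg t
  have hlt : ∀ α ∈ S, ∀ i, α i < N := fun α hα i => by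
    have := Finset.single_le_sum (f := fun i => α i) (fun _ _ => Nat.zero_le _) (Finset.mem_univ i)
    simp only [hSd α hα] at this
    omega
  set q : (Fin n →₀ ℕ) → ℂ := fun α => (bhW d α : ℂ) * B α with hq
  have e : ∀ w, ∑ v : Fin d → Fin n, (∏ j, z w (v j)) * B (bhTau v) =
      ∑ α ∈ S, q α * ∏ i, z w i ^ α i := by
    intro w
    simp only [← bhTau_prod]
    rw [bh_sum_comp (fun α => (∏ i, z w i ^ α i) * B α)]
    refine Finset.sum_congr (by congr) fun α _ => ?_
    rw [hq, nsmul_eq_mul]; ring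
  have h2 : ∑ v : Fin d → Fin n, (bhW d (bhTau v) : ℝ) * ‖B (bhTau v)‖ ^ 2 =
      (∑ w, ‖∑ α ∈ S, q α * ∏ i, z w i ^ α i‖ ^ 2) / Fintype.card Ω := by
    rw [bh_parseval z ho S hlt q, mul_div_cancel_left₀ _ hc.ne',
      bh_sum_comp (fun α => (bhW d α : ℝ) * ‖B α‖ ^ 2)]
    refine Finset.sum_congr (by congr) fun α _ => ?_
    rw [hq, nsmul_eq_mul, norm_mul, Complex.norm_natCast]; ring
  simp only [e]
  rw [h2]
  exact bh_L2_Lp _ (fun w => norm_nonneg _) _ (by positivity) (bh_L4 hN z ho S hSd q) k hk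

theorem bh_phase {n : ℕ} (c : Fin n → ℂ) (B : ℝ)
    (h : ∀ x : Fin n → ℂ, (∀ i, ‖x i‖ ≤ 1) → ‖∑ i, x i * c i‖ ≤ B) : ∑ i, ‖c i‖ ≤ B := by
  have h1 := h (fun i => (starRingEnd ℂ) (c i) / ‖c i‖) (fun i => by
    rw [norm_div, RCLike.norm_conj, Complex.norm_real, norm_norm]
    exact div_self_le_one _)
  have e : ∀ i, (starRingEnd ℂ) (c i) / ‖c i‖ * c i = ((‖c i‖ : ℝ) : ℂ) := by
    intro i
    by_cases hc : c i = 0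
    · simp [hc]
    · have : (‖c i‖ : ℂ) ≠ 0 := by simpa using hc
      rw [div_mul_eq_mul_div, mul_comm, Complex.mul_conj, Complex.normSq_eq_norm_sq]
      push_cast
      field_simp
  simp only [e] at h1
  rw [← Complex.ofReal_sum, Complex.norm_real] at h1
  exact (le_abs_self _).trans h1

theorem bh_expand {n d : ℕ} (Λ : MvPolynomial (Fin n) ℂ →ₗ[ℂ] ℂ) (p : MvPolynomial (Fin n) ℂ)
    (z : Fin n → ℂ) :
    ∑ v : Fin d → Fin n, (∏ j, z (v j)) * Λ (p * monomial (bhTau v) 1) = Λ (p * bhLin z ^ d) := by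
  rw [bhLin_pow, Finset.mul_sum, map_sum]
  refine Finset.sum_congr rfl fun v _ => ?_
  rw [mul_smul_comm, map_smul, smul_eq_mul]

theorem bh_inner {n : ℕ} (Λ : MvPolynomial (Fin n) ℂ →ₗ[ℂ] ℂ) (k : ℕ) (hk : 0 < k) (M : ℝ)
    (h : ∀ z : Fin n → ℂ, (∀ i, ‖z i‖ ≤ 1) → ‖Λ (bhLin z ^ k)‖ ≤ M) :
    ∑ u : Fin k → Fin n, ‖Λ (monomial (bhTau u) 1)‖ ^ (2 * ((k : ℝ) / (k + 1))) ≤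
      ((2 ^ k * (k * Real.exp 1 * M)) ^ 2) ^ ((k : ℝ) / (k + 1)) := by
  have hM : 0 ≤ M := (norm_nonneg _).trans (h 0 (by simp))
  set hf : (Fin n →₀ ℕ) → ℝ := fun α => ‖Λ (monomial α 1)‖ ^ 2 with hhf
  set R : ℝ := (2 ^ k * (k * Real.exp 1 * M)) ^ 2 with hR
  have hch := bhS_chain 1 k one_pos hf (fun α => by positivity) R (by positivity) ?_ k 0 hk rfl
  · refine le_trans (le_of_eq ?_) hch
    unfold bhS
    refine Finset.sum_congr rfl fun u _ => ?_
    rw [Real.rpow_mul (norm_nonneg _)]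
    simp [bhTau, hhf]
  · intro k' e hk1 hk2 hke
    obtain rfl : k' = 1 := by omega
    obtain ⟨Ω, hfin, hne, z, hz, ho⟩ := bh_torus n (2 * e + 1) (Nat.succ_pos _)
    have hc : (0 : ℝ) < Fintype.card Ω := by exact_mod_cast Fintype.card_pos
    unfold bhS
    have hrow : ∀ u : Fin 1 → Fin n,
        (∑ v : Fin e → Fin n, hf (bhTau u + bhTau v)) ^ (((1 : ℕ) : ℝ) / ((1 : ℕ) + 1)) ≤
        2 ^ e * ((∑ w, ‖Λ (X (u 0) * bhLin (z w) ^ e)‖) / Fintype.card Ω) := by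
      intro u
      have := bh_tuple (d := e) (Nat.lt_succ_self _) z ho
        (fun α => Λ (X (u 0) * monomial α 1)) 1 one_pos
      simp only [bh_expand] at this
      have e1 : ((4 : ℝ) ^ e) ^ ((1 : ℝ) / ((1 : ℕ) + 1)) = 2 ^ e := by
        rw [show (4 : ℝ) ^ e = (2 ^ e) ^ 2 by rw [← pow_mul, mul_comm, pow_mul]; norm_num,
          ← Real.rpow_natCast ((2 : ℝ) ^ e) 2, ← Real.rpow_mul (by positivity)]
        norm_num
      have e2 : (2 : ℝ) * (((1 : ℕ) : ℝ) / ((1 : ℕ) + 1)) = 1 := by norm_num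
      rw [e1, e2] at this
      simp only [Real.rpow_one] at this
      refine le_trans ?_ this
      refine Real.rpow_le_rpow (Finset.sum_nonneg fun _ _ => by positivity)
        (Finset.sum_le_sum fun v _ => ?_) (by positivity)
      have hw : (1 : ℝ) ≤ bhW e (bhTau v) := by exact_mod_cast bhW_pos v
      have e3 : hf (bhTau u + bhTau v) = ‖Λ (X (u 0) * monomial (bhTau v) 1)‖ ^ 2 := by
        rw [hhf, bhTau_one]
        simp only [X, monomial_mul, one_mul]
      rw [e3]
      exact le_mul_of_one_le_left (by positivity) hw
    have hcol : ∀ w, ∑ i, ‖Λ (X i * bhLin (z w) ^ e)‖ ≤ k * Real.exp 1 * M := by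
      intro w
      refine bh_phase _ _ fun x hx => ?_
      have h1 := bh_polar Λ k hk M h 1 e hke x (z w) hx (fun i => (hz w i).le)
      rw [pow_one, pow_one] at h1
      refine le_trans (le_of_eq ?_) h1
      rw [show bhLin x = ∑ i, x i • X i from rfl, Finset.sum_mul, map_sum]
      simp only [smul_mul_assoc, map_smul, smul_eq_mul]
    calc _ ≤ ∑ u : Fin 1 → Fin n, 2 ^ e * ((∑ w, ‖Λ (X (u 0) * bhLin (z w) ^ e)‖) /
            Fintype.card Ω) := Finset.sum_le_sum fun u _ => hrow u
      _ = 2 ^ e * ((∑ w, ∑ i, ‖Λ (X i * bhLin (z w) ^ e)‖) / Fintype.card Ω) := by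
          rw [← Finset.mul_sum, ← Finset.sum_div, Finset.sum_comm]
          congr 3
          funext w
          exact (Equiv.funUnique (Fin 1) (Fin n)).sum_comp
            (fun i => ‖Λ (X i * bhLin (z w) ^ e)‖)
      _ ≤ 2 ^ k * (k * Real.exp 1 * M) := by
          gcongr
          · norm_num
          · omega
          · rw [div_le_iff₀ hc]
            refine (Finset.sum_le_card_nsmul _ _ _ fun w _ => hcol w).trans ?_
            rw [Finset.card_univ, nsmul_eq_mul, mul_comm]
      _ = R ^ (((1 : ℕ) : ℝ) / ((1 : ℕ) + 1)) := by
          rw [hR, ← Real.rpow_natCast _ 2, ← Real.rpow_mul (by positivity)]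
          norm_num

theorem bh_block {n : ℕ} (Λ : MvPolynomial (Fin n) ℂ →ₗ[ℂ] ℂ) (k d m : ℕ) (hk : 0 < k)
    (hkd : k + d = m) (M : ℝ)
    (h : ∀ z : Fin n → ℂ, (∀ i, ‖z i‖ ≤ 1) → ‖Λ (bhLin z ^ m)‖ ≤ M) :
    bhS k d (fun α => (bhW m α : ℝ) * ‖Λ (monomial α 1)‖ ^ 2) ≤
      ((m : ℝ) ^ k) ^ ((k : ℝ) / (k + 1)) * (((4 : ℝ) ^ d) ^ ((1 : ℝ) / (k + 1)) *
      ((2 ^ k * (k * Real.exp 1 * ((m : ℝ) ^ k * Real.exp 1 * M))) ^ 2) ^ ((k : ℝ) / (k + 1))) := by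
  obtain ⟨Ω, hfin, hne, z, hz, ho⟩ := bh_torus n (2 * d + 1) (Nat.succ_pos _)
  have hc : (0 : ℝ) < Fintype.card Ω := by exact_mod_cast Fintype.card_pos
  unfold bhS
  have hrow : ∀ u : Fin k → Fin n,
      (∑ v : Fin d → Fin n, (bhW m (bhTau u + bhTau v) : ℝ) *
        ‖Λ (monomial (bhTau u + bhTau v) 1)‖ ^ 2) ^ ((k : ℝ) / (k + 1)) ≤
      ((m : ℝ) ^ k) ^ ((k : ℝ) / (k + 1)) * (((4 : ℝ) ^ d) ^ ((1 : ℝ) / (k + 1)) *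
      ((∑ w, ‖Λ (monomial (bhTau u) 1 * bhLin (z w) ^ d)‖ ^ (2 * ((k : ℝ) / (k + 1)))) /
        Fintype.card Ω)) := by
    intro u
    have := bh_tuple (d := d) (Nat.lt_succ_self _) z ho
        (fun α => Λ (monomial (bhTau u) 1 * monomial α 1)) k hk
    simp only [bh_expand] at this
    refine le_trans ?_ (mul_le_mul_of_nonneg_left this (by positivity))
    rw [← Real.mul_rpow (by positivity) (Finset.sum_nonneg fun _ _ => by positivity)]
    refine Real.rpow_le_rpow (Finset.sum_nonneg fun _ _ => by positivity) ?_ (by positivity)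
    rw [Finset.mul_sum]
    refine Finset.sum_le_sum fun v _ => ?_
    rw [monomial_mul, one_mul, ← mul_assoc]
    gcongr
    exact_mod_cast bhW_add k u (bhTau v) m hkd
  have hcol : ∀ w, ∑ u : Fin k → Fin n, ‖Λ (monomial (bhTau u) 1 * bhLin (z w) ^ d)‖ ^
      (2 * ((k : ℝ) / (k + 1))) ≤
      ((2 ^ k * (k * Real.exp 1 * ((m : ℝ) ^ k * Real.exp 1 * M))) ^ 2) ^ ((k : ℝ) / (k + 1)) := by
    intro w
    exact bh_inner (Λ ∘ₗ LinearMap.mulRight ℂ (bhLin (z w) ^ d)) k hk _ (fun y hy =>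
      bh_polar Λ m (by omega) M h k d hkd y (z w) hy (fun i => (hz w i).le))
  refine (Finset.sum_le_sum fun u _ => hrow u).trans ?_
  rw [← Finset.mul_sum, ← Finset.mul_sum, ← Finset.sum_div, Finset.sum_comm]
  gcongr
  rw [div_le_iff₀ hc]
  refine (Finset.sum_le_card_nsmul _ _ _ fun w _ => hcol w).trans ?_
  rw [Finset.card_univ, nsmul_eq_mul, mul_comm]

theorem bh_supNorm_ge {n : ℕ} (P : MvPolynomial (Fin n) ℝ) (x : Fin n → ℝ)
    (hx : ∀ i, |x i| ≤ 1) : |eval x P| ≤ supNorm P := by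
  refine le_csSup ⟨∑ α ∈ P.support, |coeff α P|, ?_⟩ ⟨x, hx, rfl⟩
  rintro y ⟨x, hx, rfl⟩
  rw [eval_eq']
  refine (Finset.abs_sum_le_sum_abs _ _).trans (Finset.sum_le_sum fun α _ => ?_)
  rw [abs_mul, Finset.abs_prod]
  refine mul_le_of_le_one_right (abs_nonneg _) (Finset.prod_le_one (fun _ _ => abs_nonneg _) ?_)
  intro i _
  rw [abs_pow]
  exact pow_le_one₀ (abs_nonneg _) (hx i)

noncomputable def bhD (k0 m : ℕ) : ℝ :=
  (m : ℝ) ^ (2 * k0) * (2 : ℝ) ^ ((m : ℝ) / k0) *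
    (2 ^ (2 * k0) * ((2 * k0 : ℕ) * Real.exp 1 * ((m : ℝ) ^ (2 * k0) * Real.exp 1 * 2 ^ m)))

theorem bh_chain_bound {n : ℕ} (Λ : MvPolynomial (Fin n) ℂ →ₗ[ℂ] ℂ) (k0 m : ℕ) (hk0 : 0 < k0)
    (hm : k0 ≤ m) (s : ℝ)
    (h : ∀ z : Fin n → ℂ, (∀ i, ‖z i‖ ≤ 1) → ‖Λ (bhLin z ^ m)‖ ≤ 2 ^ m * s) :
    bhS m 0 (fun α => (bhW m α : ℝ) * ‖Λ (monomial α 1)‖ ^ 2) ≤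
      ((bhD k0 m * s) ^ 2) ^ ((m : ℝ) / (m + 1)) := by
  have hs : 0 ≤ s := by
    have := (norm_nonneg _).trans (h 0 (by simp))
    exact nonneg_of_mul_nonneg_right this (by positivity)
  have hk0' : (0 : ℝ) < k0 := by exact_mod_cast hk0
  have hm1 : (1 : ℝ) ≤ m := by exact_mod_cast hk0.trans_le hm
  refine bhS_chain k0 m hk0 _ (fun α => by positivity) _ (by positivity) ?_ m 0 hm rfl
  intro k d hk1 hk2 hkd
  have hk : 0 < k := hk0.trans_le hk1
  have hk' : (0 : ℝ) < k := by exact_mod_cast hk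
  refine (bh_block Λ k d m hk hkd _ h).trans ?_
  have e4 : ((4 : ℝ) ^ d) ^ ((1 : ℝ) / (k + 1)) =
      (((4 : ℝ) ^ d) ^ ((1 : ℝ) / k)) ^ ((k : ℝ) / (k + 1)) := by
    rw [← Real.rpow_mul (by positivity)]
    congr 1
    field_simp
  rw [e4, ← Real.mul_rpow (by positivity) (by positivity),
    ← Real.mul_rpow (by positivity) (by positivity)]
  refine Real.rpow_le_rpow (by positivity) ?_ (by positivity)
  have a1 : (m : ℝ) ^ k ≤ ((m : ℝ) ^ (2 * k0)) ^ 2 := by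
    rw [← pow_mul]
    exact pow_le_pow_right₀ hm1 (by omega)
  have a2 : ((4 : ℝ) ^ d) ^ ((1 : ℝ) / k) ≤ ((2 : ℝ) ^ ((m : ℝ) / k0)) ^ 2 := by
    have : ((2 : ℝ) ^ ((m : ℝ) / k0)) ^ 2 = (4 : ℝ) ^ ((m : ℝ) / k0) := by
      rw [← Real.rpow_natCast, ← Real.rpow_mul (by norm_num), mul_comm, Real.rpow_mul (by norm_num)]
      norm_num
    rw [this, ← Real.rpow_natCast, ← Real.rpow_mul (by norm_num)]
    refine Real.rpow_le_rpow_of_exponent_le (by norm_num) ?_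
    rw [mul_one_div]
    have : (d : ℝ) ≤ m := by exact_mod_cast (by omega : d ≤ m)
    have : (k0 : ℝ) ≤ k := by exact_mod_cast hk1
    gcongr
  have a3 : 2 ^ k * (k * Real.exp 1 * ((m : ℝ) ^ k * Real.exp 1 * (2 ^ m * s))) ≤
      2 ^ (2 * k0) * ((2 * k0 : ℕ) * Real.exp 1 *
        ((m : ℝ) ^ (2 * k0) * Real.exp 1 * (2 ^ m * s))) := by
    gcongr
    · norm_num
  calc _ ≤ ((m : ℝ) ^ (2 * k0)) ^ 2 * (((2 : ℝ) ^ ((m : ℝ) / k0)) ^ 2 *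
      (2 ^ (2 * k0) * ((2 * k0 : ℕ) * Real.exp 1 *
        ((m : ℝ) ^ (2 * k0) * Real.exp 1 * (2 ^ m * s)))) ^ 2) := by gcongr
    _ = _ := by unfold bhD; ring

theorem bh_poly {n : ℕ} (k0 m : ℕ) (hk0 : 0 < k0) (hm : k0 ≤ m) (P : MvPolynomial (Fin n) ℝ)
    (hP : P.IsHomogeneous m) : lpNorm (2 * m / (m + 1)) P ≤ bhD k0 m * supNorm P := by
  classical
  have hm0 : (0 : ℝ) < m := by exact_mod_cast hk0.trans_le hm
  set g : (Fin n →₀ ℕ) → ℂ := fun α => ((coeff α P : ℝ) : ℂ) / bhW m α with hg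
  set Λ : MvPolynomial (Fin n) ℂ →ₗ[ℂ] ℂ := (basisMonomials (Fin n) ℂ).constr ℂ g with hΛ
  have hΛm : ∀ α, Λ (monomial α 1) = g α := by
    intro α
    have := (basisMonomials (Fin n) ℂ).constr_basis ℂ g α
    simpa using this
  set S := Finset.univ.image (bhTau : (Fin m → Fin n) → _) with hS
  have hsub : P.support ⊆ S := by
    intro α hα
    have h1 := hP (mem_support_iff.1 hα)
    have h2 : ∑ i, α i = m := by
      simpa [Finsupp.weight_apply, Finsupp.sum_fintype] using h1
    obtain ⟨t, ht⟩ := bhTau_surj m α h2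
    exact Finset.mem_image.2 ⟨t, Finset.mem_univ _, ht⟩
  have hWpos : ∀ α ∈ S, 0 < bhW m α := by
    intro α hα
    obtain ⟨t, _, rfl⟩ := Finset.mem_image.1 hα
    exact bhW_pos t
  have hreal : ∀ x : Fin n → ℝ, Λ (bhLin (fun i => (x i : ℂ)) ^ m) = ((eval x P : ℝ) : ℂ) := by
    intro x
    rw [← one_mul (bhLin (fun i => (x i : ℂ)) ^ m), ← bh_expand]
    have hpr : ∀ t : Fin m → Fin n, ∏ j, (x (t j) : ℂ) = ∏ i, (x i : ℂ) ^ bhTau t i :=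
      fun t => (bhTau_prod t (fun i => (x i : ℂ))).symm
    simp only [one_mul, hΛm, hpr]
    rw [bh_sum_comp (fun α => (∏ i, (x i : ℂ) ^ α i) * g α), eval_eq']
    push_cast
    rw [Finset.sum_subset hsub]
    · refine Finset.sum_congr (by congr) fun α hα => ?_
      have : (bhW m α : ℂ) ≠ 0 := by exact_mod_cast (hWpos α (by convert hα)).ne'
      rw [hg, nsmul_eq_mul]
      field_simp
    · intro α _ hα
      rw [notMem_support_iff.1 hα]; simp
  have hcplx : ∀ z : Fin n → ℂ, (∀ i, ‖z i‖ ≤ 1) → ‖Λ (bhLin z ^ m)‖ ≤ 2 ^ m * supNorm P := by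
    intro z hz
    refine bh_complexify Λ m _ (fun x hx => ?_) z hz
    rw [hreal, Complex.norm_real]
    exact bh_supNorm_ge P x hx
  have hs : 0 ≤ supNorm P := (abs_nonneg _).trans (bh_supNorm_ge P 0 (by simp))
  have hmain := bh_chain_bound Λ k0 m hk0 hm _ hcplx
  have hDs : 0 ≤ bhD k0 m * supNorm P := by unfold bhD; positivity
  simp only [hΛm] at hmain
  have hexp : (2 * (m : ℝ) / (m + 1)) = 2 * (m / (m + 1)) := by ring
  have hsum : ∑ α ∈ P.support, |coeff α P| ^ (2 * (m : ℝ) / (m + 1)) ≤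
      bhS m 0 (fun α => (bhW m α : ℝ) * ‖g α‖ ^ 2) := by
    have e : bhS m 0 (fun α => (bhW m α : ℝ) * ‖g α‖ ^ 2) =
        ∑ t : Fin m → Fin n, ((bhW m (bhTau t) : ℝ) * ‖g (bhTau t)‖ ^ 2) ^ ((m : ℝ) / (m + 1)) := by
      unfold bhS
      refine Finset.sum_congr rfl fun t _ => ?_
      simp [bhTau]
    rw [e, bh_sum_comp (fun α => ((bhW m α : ℝ) * ‖g α‖ ^ 2) ^ ((m : ℝ) / (m + 1)))]
    refine le_trans (Finset.sum_le_sum fun α hα => ?_)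
      (Finset.sum_le_sum_of_subset_of_nonneg (s := P.support) (by convert hsub) fun α _ _ => by
        positivity)
    have hW : (1 : ℝ) ≤ bhW m α := by exact_mod_cast hWpos α (hsub hα)
    have hW0 : (0 : ℝ) < bhW m α := by linarith
    have e2 : |coeff α P| = bhW m α * ‖g α‖ := by
      rw [hg]
      simp only [norm_div, Complex.norm_real, Complex.norm_natCast, Real.norm_eq_abs]
      field_simp
    rw [hexp, Real.rpow_mul (abs_nonneg _), Real.rpow_two, e2, nsmul_eq_mul,
      show ((bhW m α : ℝ) * ‖g α‖) ^ 2 = bhW m α * (bhW m α * ‖g α‖ ^ 2) by ring,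
      Real.mul_rpow (by positivity) (by positivity)]
    gcongr
    calc (bhW m α : ℝ) ^ ((m : ℝ) / (m + 1)) ≤ (bhW m α : ℝ) ^ (1 : ℝ) := by
          refine Real.rpow_le_rpow_of_exponent_le hW ?_
          rw [div_le_one (by positivity)]; linarith
      _ = bhW m α := Real.rpow_one _
  unfold lpNorm
  calc _ ≤ (((bhD k0 m * supNorm P) ^ 2) ^ ((m : ℝ) / (m + 1))) ^ (1 / (2 * (m : ℝ) / (m + 1))) := by
        refine Real.rpow_le_rpow (Finset.sum_nonneg fun _ _ => Real.rpow_nonneg (abs_nonneg _) _)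
          (hsum.trans hmain) (by positivity)
    _ = bhD k0 m * supNorm P := by
        rw [← Real.rpow_natCast _ 2, ← Real.rpow_mul hDs, ← Real.rpow_mul hDs]
        rw [show ((2 : ℕ) : ℝ) * ((m : ℝ) / (m + 1)) * (1 / (2 * (m : ℝ) / (m + 1))) = 1 by
          push_cast; field_simp, Real.rpow_one]

theorem bh_const_le (k0 m : ℕ) (hk0 : 0 < k0) (hm : k0 ≤ m) : BHconst m ≤ bhD k0 m := by
  have hm0 : (0 : ℝ) < m := by exact_mod_cast hk0.trans_le hm
  have hk0' : (0 : ℝ) < k0 := by exact_mod_cast hk0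
  refine csInf_le ⟨0, fun D hD => hD.1.le⟩ ⟨?_, fun n P hP => bh_poly k0 m hk0 hm P hP⟩
  unfold bhD
  push_cast
  positivity

theorem bh_const_nonneg (m : ℕ) : 0 ≤ BHconst m := Real.sInf_nonneg fun _ hD => hD.1.le

theorem bh_second (ε : ℝ) (hε : 0 < ε) :
    ∃ C : ℝ, 0 < C ∧ ∀ m : ℕ, 0 < m → BHconst m ≤ C * (2 + ε) ^ m := by
  have ht : Tendsto (fun k : ℕ => 2 * (2 : ℝ) ^ ((1 : ℝ) / k)) atTop (nhds (2 * 1)) := by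
    refine Tendsto.const_mul _ ?_
    have h1 : Tendsto (fun k : ℕ => (1 : ℝ) / k) atTop (nhds 0) := tendsto_one_div_atTop_nhds_zero_nat
    have := (Real.continuousAt_const_rpow (a := 2) (b := 0) (by norm_num)).tendsto.comp h1
    simpa [Function.comp_def] using this
  have hev : ∀ᶠ k : ℕ in atTop, 2 * (2 : ℝ) ^ ((1 : ℝ) / k) < 2 + ε :=
    ht.eventually_lt_const (by linarith)
  obtain ⟨k0, hk, hk0⟩ := (hev.and (eventually_gt_atTop 0)).exists
  set ρ : ℝ := 2 * (2 : ℝ) ^ ((1 : ℝ) / k0) / (2 + ε) with hρ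
  have hρ0 : 0 ≤ ρ := by positivity
  have hρ1 : ρ < 1 := by rw [hρ, div_lt_one (by positivity)]; exact hk
  have hlim := tendsto_pow_const_mul_const_pow_of_abs_lt_one (4 * k0) (r := ρ)
    (by rwa [abs_of_nonneg hρ0])
  obtain ⟨A, hA⟩ := hlim.bddAbove_range
  have hA' : ∀ m : ℕ, (m : ℝ) ^ (4 * k0) * ρ ^ m ≤ A := fun m => hA ⟨m, rfl⟩
  have hA0 : 0 ≤ A := le_trans (by positivity) (hA' 0)
  set E : ℝ := 2 ^ (2 * k0) * ((2 * k0 : ℕ) * Real.exp 1 * Real.exp 1) with hE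
  have hE0 : 0 ≤ E := by positivity
  set Q0 : ℝ := ∑ m ∈ Finset.range k0, BHconst m with hQ
  have hQ0 : 0 ≤ Q0 := Finset.sum_nonneg fun m _ => bh_const_nonneg m
  refine ⟨E * A + Q0 + 1, by positivity, fun m hm => ?_⟩
  have h2 : (1 : ℝ) ≤ (2 + ε) ^ m := one_le_pow₀ (by linarith)
  by_cases hmk : k0 ≤ m
  · refine (bh_const_le k0 m hk0 hmk).trans ?_
    have e : bhD k0 m = E * ((m : ℝ) ^ (4 * k0) * ρ ^ m) * (2 + ε) ^ m := by
      have e1 : (2 : ℝ) ^ ((m : ℝ) / k0) = ((2 : ℝ) ^ ((1 : ℝ) / k0)) ^ m := by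
        rw [← Real.rpow_natCast _ m, ← Real.rpow_mul (by norm_num)]
        congr 1; ring
      have e2 : ρ ^ m * (2 + ε) ^ m = 2 ^ m * ((2 : ℝ) ^ ((1 : ℝ) / k0)) ^ m := by
        rw [← mul_pow, hρ, div_mul_cancel₀ _ (by positivity), mul_pow]
      rw [mul_assoc E, mul_assoc _ (ρ ^ m), e2]
      unfold bhD
      rw [e1, hE]
      ring
    rw [e]
    have := hA' m
    gcongr
    calc E * ((m : ℝ) ^ (4 * k0) * ρ ^ m) ≤ E * A := by gcongr
      _ ≤ _ := by linarith
  · have h3 : BHconst m ≤ Q0 := Finset.single_le_sum (f := BHconst)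
      (fun i _ => bh_const_nonneg i) (Finset.mem_range.2 (by omega))
    calc BHconst m ≤ (E * A + Q0 + 1) * 1 := by nlinarith [mul_nonneg hE0 hA0]
      _ ≤ _ := by gcongr

theorem bh_first : limsup (fun m : ℕ => BHconst m ^ ((m : ℝ)⁻¹)) atTop ≤ 2 := by
  refine le_of_forall_pos_le_add fun ε hε => ?_
  obtain ⟨C, hC, h⟩ := bh_second (ε / 2) (by positivity)
  have h1 : Tendsto (fun m : ℕ => ((m : ℝ))⁻¹) atTop (nhds 0) := tendsto_inv_atTop_nhds_zero_nat
  have h2 : Tendsto (fun m : ℕ => C ^ ((m : ℝ)⁻¹) * (2 + ε / 2)) atTop (nhds (1 * (2 + ε / 2))) := by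
    refine Tendsto.mul_const _ ?_
    have := (Real.continuousAt_const_rpow (a := C) (b := 0) hC.ne').tendsto.comp h1
    simpa [Function.comp_def] using this
  have hev := h2.eventually_lt_const (u := 2 + ε) (by linarith)
  refine limsup_le_of_le ?_ ?_
  · exact isCoboundedUnder_le_of_le atTop (x := 0)
      (fun m => Real.rpow_nonneg (bh_const_nonneg m) _)
  · filter_upwards [hev, eventually_gt_atTop 0] with m hm hm0
    refine le_trans ?_ hm.le
    have hm' : (m : ℝ) ≠ 0 := by exact_mod_cast hm0.ne'
    calc BHconst m ^ ((m : ℝ)⁻¹) ≤ (C * (2 + ε / 2) ^ m) ^ ((m : ℝ)⁻¹) :=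
          Real.rpow_le_rpow (bh_const_nonneg m) (h m hm0) (by positivity)
      _ = C ^ ((m : ℝ)⁻¹) * (2 + ε / 2) := by
          rw [Real.mul_rpow hC.le (by positivity), ← Real.rpow_natCast (2 + ε / 2) m,
            ← Real.rpow_mul (by positivity), mul_inv_cancel₀ hm', Real.rpow_one]

/-- `limsup_{m→∞} D_{ℝ,m}^{1/m} ≤ 2`; equivalently, for every `ε > 0` there is a
constant `C_ε > 0` with `D_{ℝ,m} ≤ C_ε (2+ε)^m` for all positive integers `m`. -/
theorem real_BH_limsup_le_two :
    limsup (fun m : ℕ => BHconst m ^ ((m : ℝ)⁻¹)) atTop ≤ 2 ∧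
    ∀ ε : ℝ, 0 < ε → ∃ C : ℝ, 0 < C ∧ ∀ m : ℕ, 0 < m → BHconst m ≤ C * (2 + ε) ^ m := by
  exact ⟨bh_first, bh_second⟩
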